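/- Assume (L,N) is graphically admissible. Then there exists a minimum set O_m satisfying the graphical adjustment criterion for A,Y,L,N in G such that, for every minimum set Z satisfying the criterion: O_m ⊴_{H^1} Z, Y and Z\O_m are d-separated by {A} ∪ O_m in G, and A and O_m\Z are d-separated by Z in G. -/

import Mathlib

open Relation Set

namespace CausalGraph

variable {V : Type*} [Fintype V] [DecidableEq V]

/-- `p` is a path in the undirected sense from `u` to `v` along adjacency `Adj`:
a nonempty list of pairwise distinct vertices, consecutive ones adjacent,
starting at `u` and ending at `v`. -/
def IsPath (Adj : V → V → Prop) (u v : V) (p : List V) : Prop :=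
  List.Chain' Adj p ∧ p.head? = some u ∧ p.getLast? = some v ∧ p.Nodup

/-- Ancestors of `S` in the digraph `D` (every vertex is an ancestor of itself). -/
def anc (D : V → V → Prop) (S : Set V) : Set V :=
  {u | ∃ v ∈ S, Relation.ReflTransGen D u v}

/-- Descendants of `S` in the digraph `D` (every vertex is a descendant of itself). -/
def desc (D : V → V → Prop) (S : Set V) : Set V :=
  {u | ∃ v ∈ S, Relation.ReflTransGen D v u}

/-- Parents of vertices of `S` in the digraph `D`. -/
def parents (D : V → V → Prop) (S : Set V) : Set V :=
  {u | ∃ v ∈ S, D u v}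

/-- The digraph `D` is acyclic. -/
def Acyclic (D : V → V → Prop) : Prop :=
  ∀ u v, D u v → ¬ Relation.ReflTransGen D v u

/-- Vertices other than `A` lying on a directed path from `A` to `Y`. -/
def cn (D : V → V → Prop) (A Y : V) : Set V :=
  {v | v ≠ A ∧ Relation.ReflTransGen D A v ∧ Relation.ReflTransGen D v Y}

/-- The forbidden set. -/
def forb (D : V → V → Prop) (A Y : V) : Set V :=
  desc D (cn D A Y) ∪ {A}

/-- Proper back-door graph: delete every edge from `A` into `cn D A Y`. -/
def pbd (D : V → V → Prop) (A Y : V) : V → V → Prop :=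
  fun u v => D u v ∧ ¬(u = A ∧ v ∈ cn D A Y)

/-- `y` is an interior vertex of the list `p` with neighbours `x` and `z` on the path. -/
def InteriorAt (p : List V) (x y z : V) : Prop :=
  ∃ s t : List V, p = s ++ x :: y :: z :: t

/-- The path `p` is blocked by `Z` in the digraph `D`: some interior non-collider
lies in `Z`, or some interior collider has no descendant in `Z`. -/
def Blocked (D : V → V → Prop) (Z : Set V) (p : List V) : Prop :=
  (∃ x y z, InteriorAt p x y z ∧ ¬(D x y ∧ D z y) ∧ y ∈ Z) ∨
  (∃ x y z, InteriorAt p x y z ∧ (D x y ∧ D z y) ∧ ∀ d ∈ desc D {y}, d ∉ Z)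

/-- d-separation of `S` and `T` given `Z` in the digraph `D`. -/
def DSep (D : V → V → Prop) (S T Z : Set V) : Prop :=
  ∀ s ∈ S, ∀ t ∈ T, ∀ p : List V,
    IsPath (fun a b => D a b ∨ D b a) s t p → Blocked D Z p

/-- Moral graph of the subgraph of the digraph `D` induced on `Vs`. -/
def moral (D : V → V → Prop) (Vs : Set V) : SimpleGraph V :=
  SimpleGraph.fromRel (fun u v =>
    u ∈ Vs ∧ v ∈ Vs ∧ (D u v ∨ D v u ∨ ∃ w ∈ Vs, D u w ∧ D v w))

/-- Separation in an undirected graph: every path from `S` to `T` meets `W`. -/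
def USep (H : SimpleGraph V) (S T W : Set V) : Prop :=
  ∀ s ∈ S, ∀ t ∈ T, ∀ p : List V, IsPath H.Adj s t p → ∃ z ∈ W, z ∈ p

/-- `Z` is an `A`–`Y` cut in an undirected graph `H` with vertex set `Vs`. -/
def IsCut (Vs : Set V) (H : SimpleGraph V) (A Y : V) (Z : Set V) : Prop :=
  Z ⊆ Vs ∧ Z ∩ {A, Y} = ∅ ∧ ∀ p : List V, IsPath H.Adj A Y p → ∃ z ∈ Z, z ∈ p

def MinimalCut (Vs : Set V) (H : SimpleGraph V) (A Y : V) (Z : Set V) : Prop :=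
  IsCut Vs H A Y Z ∧ ∀ Z' ⊂ Z, ¬ IsCut Vs H A Y Z'

def MinimumCut (Vs : Set V) (H : SimpleGraph V) (A Y : V) (Z : Set V) : Prop :=
  IsCut Vs H A Y Z ∧ ∀ Z', IsCut Vs H A Y Z' → Z.ncard ≤ Z'.ncard

/-- Connected component of `y` in `H` restricted to the complement of `U`:
vertices reachable from `y` by paths avoiding `U`. -/
def cc (H : SimpleGraph V) (U : Set V) (y : V) : Set V :=
  {w | ∃ p : List V, IsPath H.Adj y w p ∧ ∀ x ∈ p, x ∉ U}

/-- Boundary of `S` in `H`: vertices outside `S` adjacent to some vertex of `S`. -/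
def bdry (H : SimpleGraph V) (S : Set V) : Set V :=
  {v | v ∉ S ∧ ∃ u ∈ S, H.Adj v u}

/-- The partial order `Z₁ ⊴_H Z₂` between `A`–`Y` cuts. -/
def TLE (H : SimpleGraph V) (A Y : V) (Z₁ Z₂ : Set V) : Prop :=
  USep H {Y} (Z₂ \ Z₁) Z₁ ∧ USep H {A} (Z₁ \ Z₂) Z₂

/-- Ancestors of `{A, Y} ∪ L`. -/
def ancAYL (D : V → V → Prop) (A Y : V) (L : Set V) : Set V :=
  anc D ({A, Y} ∪ L)

/-- The moral graph `H⁰` of the proper back-door graph induced on `an_G({A,Y} ∪ L)`. -/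
def H0 (D : V → V → Prop) (A Y : V) (L : Set V) : SimpleGraph V :=
  moral (pbd D A Y) (ancAYL D A Y L)

/-- The set of vertices removed from `H⁰` when constructing `H¹`. -/
def Ignore (D : V → V → Prop) (A Y : V) (L N : Set V) : Set V :=
  (ancAYL D A Y L \ {A, Y}) ∩ ((Set.univ \ N) ∪ forb D A Y)

/-- Vertex set of `H¹`. -/
def H1verts (D : V → V → Prop) (A Y : V) (L N : Set V) : Set V :=
  ancAYL D A Y L \ Ignore D A Y L N

/-- The non-parametric adjustment efficiency graph `H¹`: delete the vertices of
`Ignore`, join two remaining vertices if they are joined in `H⁰` by a path all of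
whose intermediate vertices are in `Ignore`, and join `A` and `Y` to every vertex
of `L`. -/
def H1 (D : V → V → Prop) (A Y : V) (L N : Set V) : SimpleGraph V :=
  SimpleGraph.fromRel (fun u v =>
    u ∈ H1verts D A Y L N ∧ v ∈ H1verts D A Y L N ∧
      ((∃ p : List V, IsPath (H0 D A Y L).Adj u v p ∧
          ∀ x ∈ p, x ≠ u → x ≠ v → x ∈ Ignore D A Y L N) ∨
        (u = A ∧ v ∈ L) ∨ (u = Y ∧ v ∈ L)))

/-- The graphical adjustment criterion for `A, Y, L, N` in the DAG `D`. -/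
def GAC (D : V → V → Prop) (A Y : V) (L N Z : Set V) : Prop :=
  DSep (pbd D A Y) {A} {Y} Z ∧ Z ∩ forb D A Y = ∅ ∧ L ⊆ Z ∧ Z ⊆ N

def MinimalGAC (D : V → V → Prop) (A Y : V) (L N Z : Set V) : Prop :=
  GAC D A Y L N Z ∧ ∀ Z' ⊂ Z, ¬ GAC D A Y L N Z'

def MinimumGAC (D : V → V → Prop) (A Y : V) (L N Z : Set V) : Prop :=
  GAC D A Y L N Z ∧ ∀ Z', GAC D A Y L N Z' → Z.ncard ≤ Z'.ncard

/-- Graphical admissibility of the pair `(L, N)`. -/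
def Admissible (D : V → V → Prop) (A Y : V) (L N : Set V) : Prop :=
  ∃ Z, GAC D A Y L N Z

end CausalGraph

namespace CausalGraph

theorem rtg_mono {V : Type*} {r s : V → V → Prop} {a b : V} (h : Relation.ReflTransGen r a b)
    (hs : ∀ a b, r a b → s a b) : Relation.ReflTransGen s a b := by
  induction h with
  | refl => exact .refl
  | tail _ h ih => exact ih.tail (hs _ _ h)

theorem path_of_rtg {V : Type*} {r : V → V → Prop} {u v : V} (h : Relation.ReflTransGen r u v) :
    ∃ p : List V, IsPath r u v p ∧ ∀ x ∈ p, x = v ∨ ∃ y, r x y := by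
  induction h using Relation.ReflTransGen.head_induction_on with
  | refl => exact ⟨[v], ⟨List.isChain_singleton _, rfl, rfl, by simp⟩, by simp⟩
  | @head a c hac _ ih =>
    obtain ⟨p, ⟨hc, hh, hl, hn⟩, hx⟩ := ih
    by_cases ha : a ∈ p
    · obtain ⟨s, t, rfl⟩ := List.append_of_mem ha
      refine ⟨a :: t, ⟨?_, rfl, ?_, ?_⟩, fun x hx' => hx x (by simp at hx' ⊢; tauto)⟩
      · exact (List.isChain_split.1 hc).2
      · simpa [List.getLast?_append] using hl
      · exact (List.nodup_append.1 hn).2.1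
    · cases p with
      | nil => simp at hh
      | cons b t =>
        simp only [List.head?_cons, Option.some.injEq] at hh
        subst hh
        refine ⟨a :: b :: t, ⟨List.isChain_cons_cons.2 ⟨hac, hc⟩, rfl, ?_, ?_⟩, ?_⟩
        · simpa using hl
        · exact List.nodup_cons.2 ⟨ha, hn⟩
        · intro x hx'
          rcases List.mem_cons.1 hx' with rfl | h'
          · exact Or.inr ⟨b, hac⟩
          · exact hx x h'

theorem rtg_of_list {V : Type*} {r : V → V → Prop} {v : V} {W : Set V} :
    ∀ (p : List V) (u : V), List.IsChain r (u :: p) → (u :: p).getLast? = some v →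
      (∀ x ∈ u :: p, x ∉ W) →
      Relation.ReflTransGen (fun a b => r a b ∧ a ∉ W ∧ b ∉ W) u v
  | [], u, _, hl, _ => by simp at hl; subst hl; exact .refl
  | b :: t, u, hc, hl, hW => by
    have hc' := List.isChain_cons_cons.1 hc
    refine .head ⟨hc'.1, hW u (by simp), hW b (by simp)⟩ ?_
    exact rtg_of_list t b hc'.2 (by simpa using hl) (fun x hx => hW x (by simp at hx ⊢; tauto))

theorem rtg_of_path {V : Type*} {r : V → V → Prop} {u v : V} {W : Set V} {p : List V}
    (h : IsPath r u v p) (hW : ∀ x ∈ p, x ∉ W) :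
    Relation.ReflTransGen (fun a b => r a b ∧ a ∉ W ∧ b ∉ W) u v := by
  obtain ⟨hc, hh, hl, hn⟩ := h
  cases p with
  | nil => simp at hh
  | cons a t =>
    simp only [List.head?_cons, Option.some.injEq] at hh
    subst hh
    exact rtg_of_list t a hc hl hW

/-- edges of `H` avoiding `W` -/
def Av {V : Type*} (H : SimpleGraph V) (W : Set V) (a b : V) : Prop :=
  H.Adj a b ∧ a ∉ W ∧ b ∉ W

theorem Av.symm' {V : Type*} {H : SimpleGraph V} {W : Set V} {a b : V} (h : Av H W a b) :
    Av H W b a := ⟨h.1.symm, h.2.2, h.2.1⟩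

theorem Av_rtg_symm {V : Type*} {H : SimpleGraph V} {W : Set V} {a b : V}
    (h : Relation.ReflTransGen (Av H W) a b) : Relation.ReflTransGen (Av H W) b a := by
  induction h with
  | refl => exact .refl
  | tail _ h ih => exact .head h.symm' ih

theorem usep_of {V : Type*} {H : SimpleGraph V} {W T : Set V} {s : V}
    (h : ∀ t ∈ T, ¬ Relation.ReflTransGen (Av H W) s t) : USep H {s} T W := by
  rintro s' rfl t ht p hp
  by_contra hcon
  push Not at hcon
  exact h t ht (rtg_of_path hp (fun x hx hW => hcon x hW hx))

/-- openness of a triple -/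
def Ok {V : Type*} (D : V → V → Prop) (Z : Set V) (x y z : V) : Prop :=
  (D x y → D z y → ∃ d ∈ Z, Relation.ReflTransGen D y d) ∧ (¬ (D x y ∧ D z y) → y ∉ Z)

/-- open list -/
def Op {V : Type*} (D : V → V → Prop) (Z : Set V) (p : List V) : Prop :=
  ∀ x y z, InteriorAt p x y z → Ok D Z x y z

theorem op_iff {V : Type*} {D : V → V → Prop} {Z : Set V} {p : List V} :
    Op D Z p ↔ ¬ Blocked D Z p := by
  constructor
  · rintro h (⟨x, y, z, hi, hn, hz⟩ | ⟨x, y, z, hi, hc, hd⟩)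
    · exact (h x y z hi).2 hn hz
    · obtain ⟨d, hd', hr⟩ := (h x y z hi).1 hc.1 hc.2
      exact hd d ⟨y, rfl, hr⟩ hd'
  · intro h x y z hi
    refine ⟨fun h1 h2 => ?_, fun hn hy => h (Or.inl ⟨x, y, z, hi, hn, hy⟩)⟩
    by_contra hcon
    push Not at hcon
    refine h (Or.inr ⟨x, y, z, hi, ⟨h1, h2⟩, ?_⟩)
    rintro d ⟨_, rfl, hr⟩ hd
    exact hcon d hd hr

theorem interior_cons {V : Type*} {a x y z : V} {p : List V} (h : InteriorAt p x y z) :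
    InteriorAt (a :: p) x y z := by
  obtain ⟨s, t, rfl⟩ := h
  exact ⟨a :: s, t, rfl⟩

theorem Op.tail {V : Type*} {D : V → V → Prop} {Z : Set V} {a : V} {p : List V}
    (h : Op D Z (a :: p)) : Op D Z p := fun x y z hi => h x y z (interior_cons hi)

theorem Op.head {V : Type*} {D : V → V → Prop} {Z : Set V} {a b c : V} {p : List V}
    (h : Op D Z (a :: b :: c :: p)) : Ok D Z a b c := h a b c ⟨[], p, rfl⟩

theorem op_cons {V : Type*} {D : V → V → Prop} {Z : Set V} {a b c : V} {p : List V}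
    (h : Ok D Z a b c) (h' : Op D Z (b :: c :: p)) : Op D Z (a :: b :: c :: p) := by
  rintro x y z ⟨s, t, hst⟩
  cases s with
  | nil => simp at hst; obtain ⟨rfl, rfl, rfl, _⟩ := hst; exact h
  | cons e s =>
    simp only [List.cons_append, List.cons.injEq] at hst
    exact h' x y z ⟨s, t, hst.2⟩

theorem op_pair {V : Type*} {D : V → V → Prop} {Z : Set V} {p : List V} (h : p.length ≤ 2) :
    Op D Z p := by
  rintro x y z ⟨s, t, rfl⟩
  simp at h
  omega

theorem follow {V : Type*} {D : V → V → Prop} {Z : Set V} {l : V} :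
    ∀ (p : List V) (a b : V), List.IsChain (fun a b => D a b ∨ D b a) (a :: b :: p) →
      Op D Z (a :: b :: p) → (a :: b :: p).getLast? = some l → D a b →
      (∃ d ∈ Z, Relation.ReflTransGen D b d) ∨ Relation.ReflTransGen D b l
  | [], a, b, _, _, hl, _ => by simp at hl; subst hl; exact Or.inr .refl
  | c :: p, a, b, hc, ho, hl, hab => by
    by_cases hcb : D c b
    · exact Or.inl (ho.head.1 hab hcb)
    · have hc' := (List.isChain_cons_cons.1 hc).2
      have hbc : D b c := (List.isChain_cons_cons.1 hc').1.resolve_right hcb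
      rcases follow p b c hc' ho.tail (by simpa using hl) hbc with ⟨d, hd, hr⟩ | hr
      · exact Or.inl ⟨d, hd, .head hbc hr⟩
      · exact Or.inr (.head hbc hr)

theorem dup_split {V : Type*} : ∀ (p : List V), ¬ p.Nodup →
    ∃ s v m t, p = s ++ v :: (m ++ v :: t)
  | [], h => by simp at h
  | a :: p, h => by
    by_cases ha : a ∈ p
    · obtain ⟨m, t, rfl⟩ := List.append_of_mem ha
      exact ⟨[], a, m, t, rfl⟩
    · obtain ⟨s, v, m, t, rfl⟩ := dup_split p (fun hn => h (List.nodup_cons.2 ⟨ha, hn⟩))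
      exact ⟨a :: s, v, m, t, rfl⟩

theorem interior_split {V : Type*} {s t : List V} {v x y z : V}
    (h : InteriorAt (s ++ v :: t) x y z) :
    InteriorAt (s ++ [v]) x y z ∨ InteriorAt (v :: t) x y z ∨
      (y = v ∧ (∃ s', s = s' ++ [x]) ∧ ∃ t', t = z :: t') := by
  obtain ⟨a, b, h⟩ := h
  rcases List.append_eq_append_iff.1 h with ⟨c, rfl, h2⟩ | ⟨c, rfl, h2⟩
  · exact Or.inr (Or.inl ⟨c, b, h2⟩)
  · match c, h2 with
    | [], h2 => exact Or.inr (Or.inl ⟨[], b, by simpa using h2.symm⟩)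
    | [c1], h2 =>
      simp at h2
      obtain ⟨rfl, rfl, rfl⟩ := h2
      exact Or.inr (Or.inr ⟨rfl, ⟨a, rfl⟩, ⟨b, rfl⟩⟩)
    | [c1, c2], h2 =>
      simp at h2
      obtain ⟨rfl, rfl, rfl, rfl⟩ := h2
      exact Or.inl ⟨a, [], by simp⟩
    | c1 :: c2 :: c3 :: c, h2 =>
      simp at h2
      obtain ⟨rfl, rfl, rfl, rfl⟩ := h2
      exact Or.inl ⟨a, c ++ [v], by simp⟩

theorem interior_append_left {V : Type*} {s p : List V} {x y z : V} (h : InteriorAt p x y z) :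
    InteriorAt (s ++ p) x y z := by
  obtain ⟨a, b, rfl⟩ := h
  exact ⟨s ++ a, b, by simp⟩

theorem interior_append_right {V : Type*} {s p : List V} {x y z : V} (h : InteriorAt p x y z) :
    InteriorAt (p ++ s) x y z := by
  obtain ⟨a, b, rfl⟩ := h
  exact ⟨a, b ++ s, by simp⟩

theorem exists_path {V : Type*} {D : V → V → Prop} (hac : Acyclic D) {Z : Set V} {u w : V} :
    ∀ (n : ℕ) (p : List V), p.length = n → List.IsChain (fun a b => D a b ∨ D b a) p →
      p.head? = some u → p.getLast? = some w → Op D Z p →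
      ∃ q, IsPath (fun a b => D a b ∨ D b a) u w q ∧ Op D Z q := by
  intro n
  induction n using Nat.strong_induction_on with
  | _ n ih =>
  intro p hn hc hh hl ho
  by_cases hnd : p.Nodup
  · exact ⟨p, ⟨hc, hh, hl, hnd⟩, ho⟩
  obtain ⟨s, v, m, t, rfl⟩ := dup_split p hnd
  have hc1 := List.isChain_split.1 hc
  have hc2 := (List.isChain_split (l₁ := v :: m)).1 (by simpa using hc1.2)
  refine ih (s ++ v :: t).length ?_ (s ++ v :: t) rfl ?_ ?_ ?_ ?_
  · rw [← hn]; simp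
  · exact List.isChain_split.2 ⟨hc1.1, hc2.2⟩
  · cases s with
    | nil => simpa using hh
    | cons => simpa using hh
  · simpa [List.getLast?_append, List.getLast?_cons] using hl
  · have ho1 : Op D Z (s ++ [v]) := fun x y z hi => ho x y z (by
      have := interior_append_right (s := m ++ v :: t) hi
      simpa using this)
    have ho2 : Op D Z (v :: t) := fun x y z hi => ho x y z (by
      have := interior_append_left (s := s ++ v :: m) hi
      simpa using this)
    have ho3 : Op D Z (v :: (m ++ [v])) := fun x y z hi => ho x y z (by
      have := interior_append_left (s := s) (interior_append_right (s := t) hi)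
      simpa using this)
    intro x y z hi
    rcases interior_split hi with hi | hi | ⟨rfl, ⟨s', rfl⟩, t', rfl⟩
    · exact ho1 _ _ _ hi
    · exact ho2 _ _ _ hi
    · obtain ⟨h, r, hr⟩ : ∃ h r, m ++ [y] = h :: r := by
        cases m with
        | nil => exact ⟨_, _, rfl⟩
        | cons a b => exact ⟨_, _, rfl⟩
      obtain ⟨g, r', hr'⟩ : ∃ g r', y :: m = r' ++ [g] := by
        rcases List.eq_nil_or_concat (y :: m) with h | ⟨a, b, h⟩
        · simp at h
        · exact ⟨b, a, by simpa using h⟩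
      have k1 : Ok D Z x y h := ho _ _ _ ⟨s', r ++ z :: t', by
        have : m ++ y :: z :: t' = (m ++ [y]) ++ z :: t' := by simp
        rw [this, hr]; simp⟩
      have k2 : Ok D Z g y z := ho _ _ _ ⟨s' ++ [x] ++ r', t', by
        have : y :: (m ++ y :: z :: t') = (y :: m) ++ y :: z :: t' := by simp
        rw [this, hr']; simp⟩
      have hc3 : List.IsChain (fun a b => D a b ∨ D b a) (y :: h :: r) := by
        rw [← hr]; simpa using hc2.1
      refine ⟨fun h1 h2 => ?_, fun hnc => ?_⟩
      · by_cases hhy : D h y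
        · exact k1.1 h1 hhy
        · have hyh : D y h := (List.isChain_cons_cons.1 hc3).1.resolve_right hhy
          have hl3 : (y :: h :: r).getLast? = some y := by
            rw [← hr, ← List.cons_append, List.getLast?_concat]
          rcases follow r y h hc3 (by rw [← hr]; exact ho3) hl3 hyh with ⟨d, hd, hr⟩ | hr
          · exact ⟨d, hd, .head hyh hr⟩
          · exact absurd hr (hac _ _ hyh)
      · by_cases h1 : D x y
        · exact k2.2 (fun hh => hnc ⟨h1, hh.2⟩)
        · exact k1.2 (fun hh => h1 hh.1)

/-- Bayes ball -/
inductive BB {V : Type*} (D : V → V → Prop) (Z : Set V) (s : V) : V → Bool → Prop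
  | start : BB D Z s s false
  | up {v w : V} : BB D Z s v false → v ∉ Z → D w v → BB D Z s w false
  | down {v w : V} {b : Bool} : BB D Z s v b → v ∉ Z → D v w → BB D Z s w true
  | bounce {v w : V} : BB D Z s v true → (∃ d ∈ Z, Relation.ReflTransGen D v d) → D w v →
      BB D Z s w false

theorem BB.list {V : Type*} {D : V → V → Prop} (hac : Acyclic D) {Z : Set V} {s v : V} {b : Bool}
    (h : BB D Z s v b) : ∃ t, List.IsChain (fun a b => D a b ∨ D b a) (v :: t) ∧
      (v :: t).getLast? = some s ∧ Op D Z (v :: t) ∧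
      (b = true → ∃ u t', t = u :: t' ∧ D u v) ∧
      (b = false → t = [] ∨ ∃ u t', t = u :: t' ∧ D v u) := by
  have asym : ∀ x y, D x y → ¬ D y x := fun x y h h' => hac _ _ h (.single h')
  induction h with
  | start => exact ⟨[], List.isChain_singleton _, rfl, op_pair (by simp), by simp, by simp⟩
  | @up v w _ hv hD ih =>
    obtain ⟨t, hc, hl, ho, -, h2⟩ := ih
    refine ⟨v :: t, List.isChain_cons_cons.2 ⟨Or.inl hD, hc⟩, by simpa using hl, ?_, by simp,
      fun _ => Or.inr ⟨v, t, rfl, hD⟩⟩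
    rcases h2 rfl with rfl | ⟨u, t', rfl, hu⟩
    · exact op_pair (by simp)
    · exact op_cons ⟨fun _ h => absurd h (asym _ _ hu), fun _ => hv⟩ ho
  | @down v w b _ hv hD ih =>
    obtain ⟨t, hc, hl, ho, h1, h2⟩ := ih
    refine ⟨v :: t, List.isChain_cons_cons.2 ⟨Or.inr hD, hc⟩, by simpa using hl, ?_,
      fun _ => ⟨v, t, rfl, hD⟩, by simp⟩
    cases t with
    | nil => exact op_pair (by simp)
    | cons u t' => exact op_cons ⟨fun h _ => absurd h (asym _ _ hD), fun _ => hv⟩ ho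
  | @bounce v w _ hZ hD ih =>
    obtain ⟨t, hc, hl, ho, h1, -⟩ := ih
    refine ⟨v :: t, List.isChain_cons_cons.2 ⟨Or.inl hD, hc⟩, by simpa using hl, ?_, by simp,
      fun _ => Or.inr ⟨v, t, rfl, hD⟩⟩
    obtain ⟨u, t', rfl, hu⟩ := h1 rfl
    exact op_cons ⟨fun _ _ => hZ, fun h => absurd ⟨hD, hu⟩ h⟩ ho

theorem BB.not_dsep {V : Type*} {D : V → V → Prop} (hac : Acyclic D) {Z : Set V} {s v : V}
    {b : Bool} (h : BB D Z s v b) : ¬ DSep D {v} {s} Z := by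
  intro hd
  obtain ⟨t, hc, hl, ho, -, -⟩ := h.list hac
  obtain ⟨q, hq, hoq⟩ := exists_path hac _ _ rfl hc rfl hl ho
  exact op_iff.1 hoq (hd v rfl s rfl q hq)

/-- moral connection implies d-connection -/
theorem moral_conn {V : Type*} {D : V → V → Prop} {Z Vs : Set V} {A Y : V}
    (hVs : ∀ v ∈ Vs, ∃ w, (w = A ∨ w = Y ∨ w ∈ Z) ∧ Relation.ReflTransGen D v w)
    {v : V} (h : Relation.ReflTransGen (Av (moral D Vs) Z) Y v) :
    (∃ b, BB D Z Y v b) ∨ ∃ b, BB D Z Y A b := by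
  have key : ∀ v ∈ Vs, BB D Z Y v true → (∃ b, BB D Z Y A b) ∨
      (∃ d ∈ Z, Relation.ReflTransGen D v d) ∨ (v ∉ Z ∧ BB D Z Y v false) := by
    intro v hv hb
    by_cases hz : ∃ d ∈ Z, Relation.ReflTransGen D v d
    · exact Or.inr (Or.inl hz)
    push Not at hz
    have hvZ : v ∉ Z := fun h => hz v h .refl
    obtain ⟨w, rfl | rfl | hw, hr⟩ := hVs v hv
    · left
      refine ⟨true, ?_⟩
      clear hv hVs h
      induction hr using Relation.ReflTransGen.head_induction_on with
      | refl => exact hb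
      | head hac _ ih =>
        refine ih (hb.down hvZ hac) (fun d hd hr => hz d hd (.head hac hr)) (fun h => ?_)
        exact hz _ h (.single hac)
    · right; right
      refine ⟨hvZ, ?_⟩
      clear hb hv hvZ h
      induction hr using Relation.ReflTransGen.head_induction_on with
      | refl => exact .start
      | head hac _ ih =>
        exact .up (ih (fun d hd hr => hz d hd (.head hac hr))) (fun h => hz _ h (.single hac)) hac
    · exact absurd hr (hz w hw)
  induction h with
  | refl => exact Or.inl ⟨_, .start⟩
  | @tail x w _ hxw ih =>
    rcases ih with ⟨b, hb⟩ | h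
    swap
    · exact Or.inr h
    obtain ⟨hadj, hx, hw⟩ := hxw
    have hadj : x ∈ Vs ∧ (D x w ∨ D w x ∨ ∃ c ∈ Vs, D x c ∧ D w c) := by
      rcases hadj.2 with ⟨h1, h2, h | h | ⟨c, hc, h3, h4⟩⟩ | ⟨h1, h2, h | h | ⟨c, hc, h3, h4⟩⟩
      · exact ⟨h1, Or.inl h⟩
      · exact ⟨h1, Or.inr (Or.inl h)⟩
      · exact ⟨h1, Or.inr (Or.inr ⟨c, hc, h3, h4⟩)⟩
      · exact ⟨h2, Or.inr (Or.inl h)⟩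
      · exact ⟨h2, Or.inl h⟩
      · exact ⟨h2, Or.inr (Or.inr ⟨c, hc, h4, h3⟩)⟩
    obtain ⟨hxV, h | h | ⟨c, hc, h3, h4⟩⟩ := hadj
    · exact Or.inl ⟨_, hb.down hx h⟩
    · cases b with
      | false => exact Or.inl ⟨_, hb.up hx h⟩
      | true =>
        rcases key x hxV hb with h' | h' | h'
        · exact Or.inr h'
        · exact Or.inl ⟨_, hb.bounce h' h⟩
        · exact Or.inl ⟨_, h'.2.up hx h⟩
    · have hc' := hb.down hx h3
      rcases key c hc hc' with h' | h' | h'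
      · exact Or.inr h'
      · exact Or.inl ⟨_, hc'.bounce h' h4⟩
      · exact Or.inl ⟨_, h'.2.up h'.1 h4⟩

/-- d-connection implies moral connection -/
theorem conn_moral_aux {V : Type*} {D : V → V → Prop} (hac : Acyclic D) {Z Vs : Set V} {t : V}
    (hanc : ∀ x y, D x y → y ∈ Vs → x ∈ Vs) (hZ : Z ⊆ Vs) (ht : t ∈ Vs) (htZ : t ∉ Z) :
    ∀ (p : List V) (v w : V), List.IsChain (fun a b => D a b ∨ D b a) (v :: w :: p) →
      Op D Z (v :: w :: p) → (v :: w :: p).getLast? = some t →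
      (D v w → w ∈ Vs ∧ ∀ u ∈ Vs, u ∉ Z → D u w →
        Relation.ReflTransGen (Av (moral D Vs) Z) u t) ∧
      (D w v → v ∈ Vs → w ∉ Z ∧ w ∈ Vs ∧ Relation.ReflTransGen (Av (moral D Vs) Z) w t) := by
  have asym : ∀ x y, D x y → ¬ D y x := fun x y h h' => hac _ _ h (.single h')
  have hancR : ∀ x y, Relation.ReflTransGen D x y → y ∈ Vs → x ∈ Vs := by
    intro x y h hy
    induction h using Relation.ReflTransGen.head_induction_on with
    | refl => exact hy
    | head h _ ih => exact hanc _ _ h ih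
  have edge : ∀ u w, u ∈ Vs → w ∈ Vs → u ∉ Z → w ∉ Z → D u w → Av (moral D Vs) Z u w := by
    intro u w hu hw h1 h2 h
    refine ⟨⟨?_, Or.inl ⟨hu, hw, Or.inl h⟩⟩, h1, h2⟩
    rintro rfl
    exact asym _ _ h h
  intro p
  induction p with
  | nil =>
    intro v w hc ho hl
    simp at hl
    subst hl
    exact ⟨fun h => ⟨ht, fun u hu huZ huw => .single (edge _ _ hu ht huZ htZ huw)⟩,
      fun h hv => ⟨htZ, ht, .refl⟩⟩
  | cons x p ih =>
    intro v w hc ho hl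
    have hc' := (List.isChain_cons_cons.1 hc).2
    have hwx := (List.isChain_cons_cons.1 hc').1
    obtain ⟨ih1, ih2⟩ := ih w x hc' ho.tail (by simpa using hl)
    have hok := ho.head
    constructor
    · intro hvw
      by_cases hxw : D x w
      · obtain ⟨d, hd, hr⟩ := hok.1 hvw hxw
        have hwV := hancR _ _ hr (hZ hd)
        obtain ⟨hxZ, hxV, hxt⟩ := ih2 hxw hwV
        refine ⟨hwV, fun u hu huZ huw => ?_⟩
        by_cases hux : u = x
        · rw [hux]; exact hxt
        · exact .head ⟨⟨hux, Or.inl ⟨hu, hxV, Or.inr (Or.inr ⟨w, hwV, huw, hxw⟩)⟩⟩, huZ, hxZ⟩ hxt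
      · have hwx := hwx.resolve_right hxw
        obtain ⟨hxV, hx⟩ := ih1 hwx
        have hwV := hanc _ _ hwx hxV
        have hwZ : w ∉ Z := hok.2 (fun h => hxw h.2)
        refine ⟨hwV, fun u hu huZ huw => ?_⟩
        exact .head (edge _ _ hu hwV huZ hwZ huw) (hx w hwV hwZ hwx)
    · intro hwv hv
      have hwV := hanc _ _ hwv hv
      have hwZ : w ∉ Z := hok.2 (fun h => asym _ _ h.1 hwv)
      refine ⟨hwZ, hwV, ?_⟩
      rcases hwx with h | h
      · exact (ih1 h).2 w hwV hwZ h
      · obtain ⟨hxZ, hxV, hxt⟩ := ih2 h hwV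
        exact .head (edge _ _ hxV hwV hxZ hwZ h).symm' hxt

theorem conn_moral {V : Type*} {D : V → V → Prop} (hac : Acyclic D) {Z Vs : Set V} {s t : V}
    (hanc : ∀ x y, D x y → y ∈ Vs → x ∈ Vs) (hZ : Z ⊆ Vs) (ht : t ∈ Vs) (htZ : t ∉ Z)
    (hs : s ∈ Vs) (hsZ : s ∉ Z) {p : List V}
    (hp : IsPath (fun a b => D a b ∨ D b a) s t p) (ho : Op D Z p) :
    Relation.ReflTransGen (Av (moral D Vs) Z) s t := by
  obtain ⟨hc, hh, hl, hn⟩ := hp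
  match p, hh with
  | [a], hh =>
    simp at hh hl
    subst hh; subst hl; exact .refl
  | a :: b :: p, hh =>
    simp only [List.head?_cons, Option.some.injEq] at hh
    subst hh
    obtain ⟨h1, h2⟩ := conn_moral_aux hac hanc hZ ht htZ p a b hc ho hl
    rcases (List.isChain_cons_cons.1 hc).1 with h | h
    · exact (h1 h).2 a hs hsZ h
    · obtain ⟨hbZ, hbV, hbt⟩ := h2 h hs
      refine .head ⟨⟨?_, Or.inl ⟨hs, hbV, Or.inr (Or.inl h)⟩⟩, hsZ, hbZ⟩ hbt
      rintro rfl
      exact hac _ _ h .refl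

end CausalGraph

namespace CausalGraph

theorem pbd_acyclic {V : Type*} {D : V → V → Prop} (hac : Acyclic D) (A Y : V) :
    Acyclic (pbd D A Y) := by
  intro u v h hr
  exact hac u v h.1 (rtg_mono hr (fun a b h => h.1))

theorem pbd_reach {V : Type*} {D : V → V → Prop} {A Y v w : V}
    (h : Relation.ReflTransGen D v w) :
    Relation.ReflTransGen (pbd D A Y) v w ∨
      (w ∈ forb D A Y ∧ Relation.ReflTransGen (pbd D A Y) v A) := by
  induction h using Relation.ReflTransGen.head_induction_on with
  | refl => exact Or.inl .refl
  | @head a c hac hcw ih =>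
    by_cases he : a = A ∧ c ∈ cn D A Y
    · exact Or.inr ⟨Or.inl ⟨c, he.2, hcw⟩, he.1 ▸ .refl⟩
    · rcases ih with ih | ⟨h1, h2⟩
      · exact Or.inl (.head ⟨hac, he⟩ ih)
      · exact Or.inr ⟨h1, .head ⟨hac, he⟩ h2⟩

theorem interior_chain {V : Type*} {r : V → V → Prop} {p : List V} {x y z : V}
    (hc : List.IsChain r p) (hi : InteriorAt p x y z) : r x y ∧ r y z := by
  obtain ⟨s, t, rfl⟩ := hi
  have h := (List.isChain_split.1 hc).2
  have h' := List.isChain_cons_cons.1 h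
  exact ⟨h'.1, (List.isChain_cons_cons.1 h'.2).1⟩

theorem op_sub {V : Type*} {D D' : V → V → Prop} {Z : Set V} {p : List V} (hac : Acyclic D)
    (hsub : ∀ x y, D' x y → D x y)
    (hc : List.IsChain (fun a b => D' a b ∨ D' b a) p) (ho : Op D Z p)
    (hr : ∀ y, (∃ d ∈ Z, Relation.ReflTransGen D y d) → ∃ d ∈ Z, Relation.ReflTransGen D' y d) :
    Op D' Z p := by
  have asym : ∀ x y, D x y → ¬ D y x := fun x y h h' => hac _ _ h (.single h')
  intro x y z hi
  obtain ⟨h1, h2⟩ := interior_chain hc hi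
  have hk := ho x y z hi
  refine ⟨fun a b => hr y (hk.1 (hsub _ _ a) (hsub _ _ b)), fun hn => hk.2 ?_⟩
  rintro ⟨a, b⟩
  refine hn ⟨h1.resolve_right (fun h => asym _ _ a (hsub _ _ h)), ?_⟩
  exact h2.resolve_left (fun h => asym _ _ b (hsub _ _ h))

theorem chain_ne {V : Type*} {D : V → V → Prop} {A Y : V} : ∀ (p : List V), A ∉ p →
    List.IsChain (fun a b => D a b ∨ D b a) p →
    List.IsChain (fun a b => pbd D A Y a b ∨ pbd D A Y b a) p
  | [], _, _ => List.isChain_nil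
  | [a], _, _ => List.isChain_singleton _
  | a :: b :: p, hA, hc => by
    have hc' := List.isChain_cons_cons.1 hc
    have ha : a ≠ A := fun h => hA (by simp [h])
    have hb : b ≠ A := fun h => hA (by simp [h])
    refine List.isChain_cons_cons.2 ⟨?_, chain_ne (b :: p) (fun h => hA (by simp at h ⊢; tauto)) hc'.2⟩
    rcases hc'.1 with h | h
    · exact Or.inl ⟨h, fun h => ha h.1⟩
    · exact Or.inr ⟨h, fun h => hb h.1⟩

theorem chain_A {V : Type*} {D : V → V → Prop} {A Y o : V} {Z : Set V}
    {p : List V} (hp : IsPath (fun a b => D a b ∨ D b a) A o p) (ho : Op D Z p)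
    (hZ : Z ∩ forb D A Y = ∅) (hof : o ∉ forb D A Y) :
    List.IsChain (fun a b => pbd D A Y a b ∨ pbd D A Y b a) p := by
  obtain ⟨hc, hh, hl, hn⟩ := hp
  match p, hh with
  | [a], hh => exact List.isChain_singleton _
  | a :: b :: p, hh =>
    simp only [List.head?_cons, Option.some.injEq] at hh
    subst hh
    have hc' := List.isChain_cons_cons.1 hc
    have hn' := List.nodup_cons.1 hn
    refine List.isChain_cons_cons.2 ⟨?_, chain_ne _ hn'.1 hc'.2⟩
    rcases hc'.1 with h | h
    · refine Or.inl ⟨h, fun hb => ?_⟩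
      rcases follow p a b hc ho hl h with ⟨d, hd, hr⟩ | hr
      · have : d ∈ Z ∩ forb D a Y := ⟨hd, Or.inl ⟨b, hb.2, hr⟩⟩
        rw [hZ] at this
        exact this
      · exact hof (Or.inl ⟨b, hb.2, hr⟩)
    · exact Or.inr ⟨h, fun hb => hn'.1 (by simp [hb.1])⟩

theorem chain_Y {V : Type*} {D : V → V → Prop} (hac : Acyclic D) {A Y o : V} {Z : Set V}
    (hAZ : A ∈ Z) (hoA : o ≠ A) : ∀ (p : List V) (v : V),
    List.IsChain (fun a b => D a b ∨ D b a) (v :: p) → (v :: p).getLast? = some o →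
    Op D Z (v :: p) → (∀ c r, p = c :: r → v = A → D c v) →
    List.IsChain (fun a b => pbd D A Y a b ∨ pbd D A Y b a) (v :: p)
  | [], v, _, _, _, _ => List.isChain_singleton _
  | b :: r, v, hc, hl, ho, hh => by
    have asym : ∀ x y, D x y → ¬ D y x := fun x y h h' => hac _ _ h (.single h')
    have hc' := List.isChain_cons_cons.1 hc
    have hcol : ∀ c r', r = c :: r' → b = A → D v b ∧ D c b := by
      rintro c r' rfl rfl
      by_contra hcon
      exact ho.head.2 hcon hAZ
    refine List.isChain_cons_cons.2 ⟨?_, chain_Y hac hAZ hoA r b hc'.2 (by simpa using hl) ho.tail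
      (fun c r' h1 h2 => (hcol c r' h1 h2).2)⟩
    by_cases hv : v = A
    · exact Or.inr ⟨hh b r rfl hv, fun h => h.2.1 hv⟩
    · rcases hc'.1 with h | h
      · exact Or.inl ⟨h, fun h => hv h.1⟩
      · refine Or.inr ⟨h, fun hb => ?_⟩
        cases r with
        | nil => simp at hl; exact hoA (hl.symm.trans hb.1)
        | cons c r' => exact asym _ _ h (hcol c r' rfl hb.1).1

theorem anc_closed {V : Type*} {D : V → V → Prop} {A Y : V} {L : Set V} {x y : V}
    (h : D x y) (hy : y ∈ ancAYL D A Y L) : x ∈ ancAYL D A Y L := by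
  obtain ⟨v, hv, hr⟩ := hy
  exact ⟨v, hv, .head h hr⟩

theorem anc_pbd {V : Type*} {D : V → V → Prop} {A Y : V} {L Z : Set V} (hL : L ⊆ Z) :
    ∀ v ∈ ancAYL D A Y L, ∃ w, (w = A ∨ w = Y ∨ w ∈ Z) ∧
      Relation.ReflTransGen (pbd D A Y) v w := by
  rintro v ⟨w, hw, hr⟩
  rcases pbd_reach (A := A) (Y := Y) hr with h | ⟨_, h⟩
  · refine ⟨w, ?_, h⟩
    rcases hw with (h | h) | h
    · exact Or.inl h
    · exact Or.inr (Or.inl h)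
    · exact Or.inr (Or.inr (hL h))
  · exact ⟨A, Or.inl rfl, h⟩

theorem H0_mem {V : Type*} {D : V → V → Prop} {A Y : V} {L : Set V} {a b : V}
    (h : (H0 D A Y L).Adj a b) : a ∈ ancAYL D A Y L ∧ b ∈ ancAYL D A Y L := by
  rcases h.2 with h | h
  · exact ⟨h.1, h.2.1⟩
  · exact ⟨h.2.1, h.1⟩

theorem H1_mem {V : Type*} {D : V → V → Prop} {A Y : V} {L N : Set V} {a b : V}
    (h : (H1 D A Y L N).Adj a b) : a ∈ H1verts D A Y L N ∧ b ∈ H1verts D A Y L N := by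
  rcases h.2 with h | h
  · exact ⟨h.1, h.2.1⟩
  · exact ⟨h.2.1, h.1⟩

theorem h1_of_h0 {V : Type*} {D : V → V → Prop} {A Y : V} {L N Z : Set V} {u v : V}
    (h : Relation.ReflTransGen (Av (H0 D A Y L) Z) u v)
    (hu : u ∈ H1verts D A Y L N) (hv : v ∈ H1verts D A Y L N) :
    Relation.ReflTransGen (Av (H1 D A Y L N) Z) u v := by
  have key : (u ∈ H1verts D A Y L N → Relation.ReflTransGen (Av (H1 D A Y L N) Z) u v) ∧
      ∃ w ∈ H1verts D A Y L N, (w = u ∨ w ∉ Z) ∧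
      Relation.ReflTransGen (Av (H1 D A Y L N) Z) w v ∧
      Relation.ReflTransGen
        (fun a b => (H0 D A Y L).Adj a b ∧ a ∈ Ignore D A Y L N) u w := by
    clear hu
    induction h using Relation.ReflTransGen.head_induction_on with
    | refl => exact ⟨fun _ => .refl, v, hv, Or.inl rfl, .refl, .refl⟩
    | @head a c hac hcv ih =>
      obtain ⟨-, w, hw, hwZ, hwv, hcw⟩ := ih
      have hwZ' : w ∉ Z := by
        rcases hwZ with rfl | h
        · exact hac.2.2
        · exact h
      have ha : a ∈ H1verts D A Y L N → Relation.ReflTransGen (Av (H1 D A Y L N) Z) a v := by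
        intro ha
        by_cases haw : a = w
        · rw [haw]; exact hwv
        refine .head ⟨⟨haw, Or.inl ⟨ha, hw, Or.inl ?_⟩⟩, hac.2.1, hwZ'⟩ hwv
        have hr : Relation.ReflTransGen (fun x y => (H0 D A Y L).Adj x y ∧
            (x = a ∨ x ∈ Ignore D A Y L N)) a w :=
          .head ⟨hac.1, Or.inl rfl⟩ (rtg_mono hcw (fun x y h => ⟨h.1, Or.inr h.2⟩))
        obtain ⟨p, ⟨h1, h2, h3, h4⟩, hx⟩ := path_of_rtg hr
        refine ⟨p, ⟨List.IsChain.imp (fun x y h => h.1) h1, h2, h3, h4⟩, ?_⟩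
        intro x hxp hxa hxw
        obtain ⟨y, hy⟩ := (hx x hxp).resolve_left hxw
        exact hy.2.resolve_left hxa
      refine ⟨ha, ?_⟩
      by_cases haV : a ∈ H1verts D A Y L N
      · exact ⟨a, haV, Or.inl rfl, ha haV, .refl⟩
      · have haI : a ∈ Ignore D A Y L N := by
          by_contra hI
          exact haV ⟨(H0_mem hac.1).1, hI⟩
        exact ⟨w, hw, Or.inr hwZ', hwv, .head ⟨hac.1, haI⟩ hcw⟩
  exact key.1 hu

theorem h0_of_h1 {V : Type*} {D : V → V → Prop} {A Y : V} {L N Z : Set V} {u v : V}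
    (h : Relation.ReflTransGen (Av (H1 D A Y L N) Z) u v)
    (hL : L ⊆ Z) (hI : ∀ x ∈ Ignore D A Y L N, x ∉ Z) :
    Relation.ReflTransGen (Av (H0 D A Y L) Z) u v := by
  have main : ∀ a b, a ∉ Z → b ∉ Z → (a ∈ H1verts D A Y L N ∧ b ∈ H1verts D A Y L N ∧
      ((∃ p : List V, IsPath (H0 D A Y L).Adj a b p ∧
          ∀ x ∈ p, x ≠ a → x ≠ b → x ∈ Ignore D A Y L N) ∨
        (a = A ∧ b ∈ L) ∨ (a = Y ∧ b ∈ L))) →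
      Relation.ReflTransGen (Av (H0 D A Y L) Z) a b := by
    rintro a b ha hb ⟨-, -, ⟨p, hp, hx⟩ | h | h⟩
    · refine rtg_of_path hp (fun x hxp => ?_)
      by_cases h1 : x = a
      · rw [h1]; exact ha
      by_cases h2 : x = b
      · rw [h2]; exact hb
      exact hI x (hx x hxp h1 h2)
    · exact absurd (hL h.2) hb
    · exact absurd (hL h.2) hb
  induction h with
  | refl => exact .refl
  | @tail b c _ hbc ih =>
    refine ih.trans ?_
    rcases hbc.1.2 with h | h
    · exact main _ _ hbc.2.1 hbc.2.2 h
    · exact Av_rtg_symm (main _ _ hbc.2.2 hbc.2.1 h)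

/-! lattice part -/

theorem bdry_submod {V : Type*} [Fintype V] (H : SimpleGraph V) (S T : Set V) :
    (bdry H (S ∩ T)).ncard + (bdry H (S ∪ T)).ncard ≤ (bdry H S).ncard + (bdry H T).ncard := by
  rw [← Set.ncard_union_add_ncard_inter (bdry H (S ∩ T)) (bdry H (S ∪ T)) (Set.toFinite _)
    (Set.toFinite _), ← Set.ncard_union_add_ncard_inter (bdry H S) (bdry H T) (Set.toFinite _)
    (Set.toFinite _)]
  refine Nat.add_le_add (Set.ncard_le_ncard ?_ (Set.toFinite _))
    (Set.ncard_le_ncard ?_ (Set.toFinite _))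
  · rintro v (⟨h1, u, hu, h2⟩ | ⟨h1, u, hu, h2⟩)
    · by_cases hS : v ∈ S
      · exact Or.inr ⟨fun hT => h1 ⟨hS, hT⟩, u, hu.2, h2⟩
      · exact Or.inl ⟨hS, u, hu.1, h2⟩
    · rcases hu with hu | hu
      · exact Or.inl ⟨fun h => h1 (Or.inl h), u, hu, h2⟩
      · exact Or.inr ⟨fun h => h1 (Or.inr h), u, hu, h2⟩
  · rintro v ⟨⟨-, u, hu, h2⟩, ⟨h1, -⟩⟩
    exact ⟨⟨fun h => h1 (Or.inl h), u, hu.1, h2⟩, ⟨fun h => h1 (Or.inr h), u, hu.2, h2⟩⟩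

/-- `Y`-side sets -/
def Good {V : Type*} (H : SimpleGraph V) (A Y : V) (S : Set V) : Prop :=
  Y ∈ S ∧ A ∉ S ∧ A ∉ bdry H S

theorem Good.inter {V : Type*} {H : SimpleGraph V} {A Y : V} {S T : Set V}
    (hS : Good H A Y S) (hT : Good H A Y T) : Good H A Y (S ∩ T) := by
  refine ⟨⟨hS.1, hT.1⟩, fun h => hS.2.1 h.1, ?_⟩
  rintro ⟨_, u, hu, h⟩
  exact hS.2.2 ⟨hS.2.1, u, hu.1, h⟩

theorem Good.union {V : Type*} {H : SimpleGraph V} {A Y : V} {S T : Set V}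
    (hS : Good H A Y S) (hT : Good H A Y T) : Good H A Y (S ∪ T) := by
  refine ⟨Or.inl hS.1, fun h => h.elim hS.2.1 hT.2.1, ?_⟩
  rintro ⟨_, u, hu | hu, h⟩
  · exact hS.2.2 ⟨hS.2.1, u, hu, h⟩
  · exact hT.2.2 ⟨hT.2.1, u, hu, h⟩

theorem exists_least {V : Type*} [Fintype V] (H : SimpleGraph V) (A Y : V)
    (hne : ∃ S, Good H A Y S) : ∃ S, Good H A Y S ∧
      (∀ T, Good H A Y T → (bdry H S).ncard ≤ (bdry H T).ncard) ∧
      ∀ T, Good H A Y T → (bdry H T).ncard ≤ (bdry H S).ncard → S ⊆ T := by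
  obtain ⟨S₀, hS₀, hmin₀⟩ := Set.exists_min_image {S | Good H A Y S} (fun S => (bdry H S).ncard)
    (Set.toFinite _) hne
  obtain ⟨S, ⟨hS, hS'⟩, hmin⟩ := Set.exists_min_image
    {S | Good H A Y S ∧ (bdry H S).ncard ≤ (bdry H S₀).ncard} (fun S => S.ncard)
    (Set.toFinite _) ⟨S₀, hS₀, le_rfl⟩
  refine ⟨S, hS, fun T hT => hS'.trans (hmin₀ T hT), fun T hT hTS => ?_⟩
  have h1 := bdry_submod H S T
  have h2 := hmin₀ _ (hS.union hT)
  have h3 : (S ∩ T) ∈ {S | Good H A Y S ∧ (bdry H S).ncard ≤ (bdry H S₀).ncard} := by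
    refine ⟨hS.inter hT, ?_⟩
    omega
  have h4 := hmin _ h3
  have h5 : S ∩ T = S := Set.eq_of_subset_of_ncard_le Set.inter_subset_left h4 (Set.toFinite _)
  exact Set.inter_eq_left.1 h5

/-- the `Y`-side component -/
def comp {V : Type*} (H : SimpleGraph V) (Z : Set V) (Y : V) : Set V :=
  {v | Relation.ReflTransGen (Av H Z) Y v}

theorem comp_not_mem {V : Type*} {H : SimpleGraph V} {Z : Set V} {Y v : V} (hY : Y ∉ Z)
    (h : v ∈ comp H Z Y) : v ∉ Z := by
  rcases Relation.ReflTransGen.cases_tail h with h | ⟨c, _, h⟩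
  · rw [h]; exact hY
  · exact h.2.2

theorem bdry_comp {V : Type*} {H : SimpleGraph V} {Z : Set V} {Y : V} (hY : Y ∉ Z) :
    bdry H (comp H Z Y) ⊆ Z := by
  rintro v ⟨h1, u, hu, h2⟩
  by_contra hv
  exact h1 (Relation.ReflTransGen.tail hu ⟨h2.symm, comp_not_mem hY hu, hv⟩)

theorem comp_good {V : Type*} {H : SimpleGraph V} {Z : Set V} {A Y : V} (hY : Y ∉ Z) (hA : A ∉ Z)
    (h : ¬ Relation.ReflTransGen (Av H Z) Y A) : Good H A Y (comp H Z Y) :=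
  ⟨.refl, h, fun h' => hA (bdry_comp hY h')⟩

theorem reach_in {V : Type*} {H : SimpleGraph V} {S : Set V} {Y v : V} (hY : Y ∈ S)
    (h : Relation.ReflTransGen (Av H (bdry H S)) Y v) : v ∈ S := by
  induction h with
  | refl => exact hY
  | @tail b c _ hbc ih =>
    by_contra hc
    exact hbc.2.2 ⟨hc, b, ih, hbc.1.symm⟩

theorem Av_mono {V : Type*} {H : SimpleGraph V} {Z W : Set V} {a b : V}
    (h : Relation.ReflTransGen (Av H W) a b) (hZ : Z ⊆ W) :
    Relation.ReflTransGen (Av H Z) a b :=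
  rtg_mono h (fun _ _ h => ⟨h.1, fun h' => h.2.1 (hZ h'), fun h' => h.2.2 (hZ h')⟩)

/-! assembly -/

theorem sepH0 {V : Type*} {D : V → V → Prop} (hac : Acyclic D) {A Y : V} {L N Z : Set V}
    (hZ : GAC D A Y L N Z) :
    ¬ Relation.ReflTransGen (Av (H0 D A Y L) (Z ∩ ancAYL D A Y L)) Y A := by
  intro h
  have h' : Relation.ReflTransGen (Av (moral (pbd D A Y) (ancAYL D A Y L)) Z) Y A :=
    rtg_mono h (fun a b hab => ⟨hab.1, fun ha => hab.2.1 ⟨ha, (H0_mem hab.1).1⟩,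
      fun hb => hab.2.2 ⟨hb, (H0_mem hab.1).2⟩⟩)
  rcases moral_conn (anc_pbd hZ.2.2.1) h' with ⟨b, hb⟩ | ⟨b, hb⟩ <;>
    exact hb.not_dsep (pbd_acyclic hac A Y) hZ.1

theorem AYL_sub {V : Type*} {D : V → V → Prop} {A Y : V} {L : Set V} :
    {A, Y} ∪ L ⊆ ancAYL D A Y L := fun v hv => ⟨v, hv, .refl⟩

theorem Y_forb {V : Type*} {D : V → V → Prop} {A Y : V} (hAY : A ≠ Y)
    (h : Relation.ReflTransGen D A Y) : Y ∈ forb D A Y :=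
  Or.inl ⟨Y, ⟨hAY.symm, h, .refl⟩, .refl⟩

theorem AY_H1 {V : Type*} {D : V → V → Prop} {A Y : V} {L N : Set V} :
    A ∈ H1verts D A Y L N ∧ Y ∈ H1verts D A Y L N :=
  ⟨⟨AYL_sub (by simp), fun h => h.1.2 (by simp)⟩, ⟨AYL_sub (by simp), fun h => h.1.2 (by simp)⟩⟩

theorem L_H1 {V : Type*} {D : V → V → Prop} {A Y : V} {L N : Set V}
    (hLnd : L ∩ desc D {A} = ∅) (hN : {A, Y} ∪ L ⊆ N) : L ⊆ H1verts D A Y L N := by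
  intro l hl
  refine ⟨AYL_sub (Or.inr hl), ?_⟩
  rintro ⟨-, h | h⟩
  · exact h.2 (hN (Or.inr hl))
  · have hd : l ∈ L ∩ desc D {A} := by
      refine ⟨hl, A, rfl, ?_⟩
      rcases h with ⟨c, hc, hr⟩ | h
      · exact hc.2.1.trans hr
      · rw [h]
    rw [hLnd] at hd
    exact hd

theorem gac_of_good {V : Type*} {D : V → V → Prop} (hac : Acyclic D) {A Y : V} {L N S : Set V}
    (hLnd : L ∩ desc D {A} = ∅) (hLY : Y ∉ L) (hN : {A, Y} ∪ L ⊆ N)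
    (hS : Good (H1 D A Y L N) A Y S) :
    bdry (H1 D A Y L N) S ⊆ H1verts D A Y L N ∧ GAC D A Y L N (bdry (H1 D A Y L N) S) := by
  have hsub : bdry (H1 D A Y L N) S ⊆ H1verts D A Y L N := by
    rintro v ⟨_, u, _, h⟩
    exact (H1_mem h).1
  have hYn : Y ∉ bdry (H1 D A Y L N) S := fun h => h.1 hS.1
  have hL1 := L_H1 hLnd hN
  refine ⟨hsub, ?_, ?_, ?_, ?_⟩
  · rintro _ rfl _ rfl p hp
    by_contra hb
    have ho := op_iff.2 hb
    have h0 := conn_moral (pbd_acyclic hac _ _) (Vs := ancAYL D _ _ L)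
      (fun x y h => anc_closed h.1) (fun z hz => (hsub hz).1) (AY_H1 (N := N)).2.1 hYn
      (AY_H1 (N := N)).1.1 hS.2.2 hp ho
    have h1 := h1_of_h0 (N := N) h0 AY_H1.1 AY_H1.2
    exact hS.2.1 (reach_in hS.1 (Av_rtg_symm h1))
  · ext x
    simp only [Set.mem_inter_iff, Set.mem_empty_iff_false, iff_false, not_and]
    intro hx hf
    refine (hsub hx).2 ⟨⟨(hsub hx).1, ?_⟩, Or.inr hf⟩
    rintro (rfl | rfl)
    · exact hS.2.2 hx
    · exact hYn hx
  · intro l hl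
    have hlA : A ≠ l := by
      rintro rfl
      have : A ∈ L ∩ desc D {A} := ⟨hl, A, rfl, .refl⟩
      rw [hLnd] at this
      exact this
    have hlY : l ≠ Y := fun h => hLY (h ▸ hl)
    have hA : (H1 D A Y L N).Adj A l :=
      ⟨hlA, Or.inl ⟨AY_H1.1, hL1 hl, Or.inr (Or.inl ⟨rfl, hl⟩)⟩⟩
    have hY : (H1 D A Y L N).Adj l Y :=
      ⟨hlY, Or.inr ⟨AY_H1.2, hL1 hl, Or.inr (Or.inr ⟨rfl, hl⟩)⟩⟩
    refine ⟨fun h => hS.2.2 ⟨hS.2.1, l, h, hA⟩, Y, hS.1, hY⟩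
  · intro x hx
    by_contra hxN
    refine (hsub hx).2 ⟨⟨(hsub hx).1, ?_⟩, Or.inl ⟨trivial, hxN⟩⟩
    rintro (rfl | rfl)
    · exact hS.2.2 hx
    · exact hYn hx

theorem good_of_gac {V : Type*} {D : V → V → Prop} (hac : Acyclic D) {A Y : V} {L N Z : Set V}
    (hAY : A ≠ Y) (hAancY : Relation.ReflTransGen D A Y) (hZ : GAC D A Y L N Z) :
    Good (H1 D A Y L N) A Y (comp (H1 D A Y L N) (Z ∩ ancAYL D A Y L) Y) ∧
    bdry (H1 D A Y L N) (comp (H1 D A Y L N) (Z ∩ ancAYL D A Y L) Y) ⊆ Z ∩ ancAYL D A Y L := by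
  have hf : ∀ x ∈ forb D A Y, x ∉ Z := fun x hx hxZ => by
    have : x ∈ Z ∩ forb D A Y := ⟨hxZ, hx⟩
    rw [hZ.2.1] at this
    exact this
  have hY : Y ∉ Z ∩ ancAYL D A Y L := fun h => hf Y (Y_forb hAY hAancY) h.1
  have hA : A ∉ Z ∩ ancAYL D A Y L := fun h => hf A (Or.inr rfl) h.1
  refine ⟨comp_good hY hA (fun h => sepH0 hac hZ (h0_of_h1 h ?_ ?_)), bdry_comp hY⟩
  · exact fun l hl => ⟨hZ.2.2.1 hl, AYL_sub (Or.inr hl)⟩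
  · rintro x ⟨_, h | h⟩ hx
    · exact h.2 (hZ.2.2.2 hx.1)
    · exact hf x h hx.1

end CausalGraph

namespace CausalGraph

/-- Theorem 2, part 3 (statement 13): if `(L, N)` is admissible, there exists a
minimum set `O_m` satisfying the graphical adjustment criterion such that for every
minimum set `Z` satisfying the criterion, `O_m ⊴_{H¹} Z`,
`Y ⊥⊥_G Z \ O_m | {A} ∪ O_m` and `A ⊥⊥_G O_m \ Z | Z`. -/
theorem stmt13 {V : Type*} [Fintype V] [DecidableEq V]
    (D : V → V → Prop) (hacy : Acyclic D)
    (A Y : V) (L N : Set V)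
    (hAY : A ≠ Y) (hAancY : Relation.ReflTransGen D A Y)
    (hLnd : L ∩ desc D {A} = ∅) (hLY : Y ∉ L)
    (hN : {A, Y} ∪ L ⊆ N)
    (hadm : Admissible D A Y L N) :
    ∃ Om : Set V, MinimumGAC D A Y L N Om ∧
      ∀ Z, MinimumGAC D A Y L N Z →
        TLE (H1 D A Y L N) A Y Om Z ∧
        DSep D {Y} (Z \ Om) ({A} ∪ Om) ∧
        DSep D {A} (Om \ Z) Z := by
  obtain ⟨Z0, hZ0⟩ := hadm
  obtain ⟨S, hS, hmin, hleast⟩ := exists_least (H1 D A Y L N) A Y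
    ⟨_, (good_of_gac hacy hAY hAancY hZ0).1⟩
  obtain ⟨hOsub, hOg⟩ := gac_of_good hacy hLnd hLY hN hS
  refine ⟨bdry (H1 D A Y L N) S, ⟨hOg, fun Z' hZ' => ?_⟩, ?_⟩
  · obtain ⟨h1, h2⟩ := good_of_gac hacy hAY hAancY hZ'
    exact (hmin _ h1).trans
      (Set.ncard_le_ncard (h2.trans Set.inter_subset_left) (Set.toFinite _))
  rintro Z ⟨hZ, hZmin⟩
  obtain ⟨hT, hTsub⟩ := good_of_gac hacy hAY hAancY hZ
  set T := comp (H1 D A Y L N) (Z ∩ ancAYL D A Y L) Y with hTdef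
  obtain ⟨hTV, hTg⟩ := gac_of_good hacy hLnd hLY hN hT
  have hTZ : bdry (H1 D A Y L N) T = Z :=
    Set.eq_of_subset_of_ncard_le (hTsub.trans Set.inter_subset_left) (hZmin _ hTg) (Set.toFinite _)
  have hZV : Z ⊆ H1verts D A Y L N := hTZ ▸ hTV
  have hZan : Z ∩ ancAYL D A Y L = Z := Set.inter_eq_left.2 (fun z hz => (hZV hz).1)
  have hST : S ⊆ T := hleast T hT (by rw [hTZ]; exact hZmin _ hOg)
  have hAZ : A ∉ Z := hTZ ▸ hT.2.2
  set Om := bdry (H1 D A Y L N) S with hOm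
  have ha : ∀ z ∈ Z \ Om, ¬ Relation.ReflTransGen (Av (H1 D A Y L N) Om) Y z := by
    rintro z ⟨hz, _⟩ hr
    have hzT := hST (reach_in hS.1 hr)
    rw [← hTZ] at hz
    exact hz.1 hzT
  have hb : ∀ o ∈ Om \ Z, ¬ Relation.ReflTransGen (Av (H1 D A Y L N) Z) A o := by
    rintro o ⟨⟨_, u, hu, hou⟩, hoZ⟩ hr
    have huT := hST hu
    have huZ : u ∉ Z := fun h => by
      rw [← hTZ] at h
      exact h.1 huT
    have huT' : Relation.ReflTransGen (Av (H1 D A Y L N) Z) Y u := by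
      rw [hTdef, hZan] at huT; exact huT
    have hYA := (huT'.tail ⟨hou.symm, huZ, hoZ⟩).trans (Av_rtg_symm hr)
    apply hT.2.1
    rw [hTdef, hZan]
    exact hYA
  refine ⟨⟨usep_of ha, usep_of hb⟩, ?_, ?_⟩
  · rintro y hy z hz p hp
    have hy' : y = Y := hy
    subst hy'
    by_contra hbl
    have ho := op_iff.2 hbl
    have hzA : z ≠ A := fun h => hAZ (h ▸ hz.1)
    obtain ⟨hc, hh, hl, hn⟩ := hp
    have hc' : List.IsChain (fun a b => pbd D A y a b ∨ pbd D A y b a) p := by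
      cases p with
      | nil => simp at hh
      | cons a t =>
        simp only [List.head?_cons, Option.some.injEq] at hh
        subst hh
        exact chain_Y hacy (Z := {A} ∪ Om) (Or.inl rfl) hzA t a hc hl ho
          (fun c r _ h => absurd h.symm hAY)
    have ho' : Op (pbd D A y) ({A} ∪ Om) p := by
      refine op_sub hacy (fun x y h => h.1) hc' ho ?_
      rintro x ⟨d, hd, hr⟩
      rcases pbd_reach (A := A) (Y := y) hr with h | ⟨_, h⟩
      · exact ⟨d, hd, h⟩
      · exact ⟨A, Or.inl rfl, h⟩
    have h0 := conn_moral (pbd_acyclic hacy A y) (Vs := ancAYL D A y L) (Z := {A} ∪ Om)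
      (fun x y h => anc_closed h.1)
      (by
        rintro x (hx | hx)
        · have hx' : x = A := hx
          rw [hx']; exact (AY_H1 (N := N)).1.1
        · exact (hOsub hx).1)
      (hZV hz.1).1
      (by
        rintro (h | h)
        · exact hzA h
        · exact hz.2 h)
      (AY_H1 (N := N)).2.1
      (by
        rintro (h | h)
        · exact hAY h.symm
        · exact h.1 hS.1) ⟨hc', hh, hl, hn⟩ ho'
    exact ha z hz (h1_of_h0 (Av_mono h0 Set.subset_union_right) AY_H1.2 (hZV hz.1))
  · rintro a hha o hoo p hp
    have ha' : a = A := hha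
    subst ha'
    by_contra hbl
    have ho := op_iff.2 hbl
    have hof : o ∉ forb D a Y := fun h => by
      have : o ∈ Om ∩ forb D a Y := ⟨hoo.1, h⟩
      rw [hOg.2.1] at this
      exact this
    have hc' := chain_A hp ho hZ.2.1 hof
    obtain ⟨hc, hh, hl, hn⟩ := hp
    have ho' : Op (pbd D a Y) Z p := by
      refine op_sub hacy (fun x y h => h.1) hc' ho ?_
      rintro x ⟨d, hd, hr⟩
      rcases pbd_reach (A := a) (Y := Y) hr with h | ⟨h, _⟩
      · exact ⟨d, hd, h⟩
      · have : d ∈ Z ∩ forb D a Y := ⟨hd, h⟩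
        rw [hZ.2.1] at this
        exact this.elim
    have h0 := conn_moral (pbd_acyclic hacy a Y) (Vs := ancAYL D a Y L) (Z := Z)
      (fun x y h => anc_closed h.1) (fun z hz => (hZV hz).1) (hOsub hoo.1).1 hoo.2
      (AY_H1 (N := N)).1.1 hAZ ⟨hc', hh, hl, hn⟩ ho'
    exact hb o hoo (h1_of_h0 h0 AY_H1.1 (hOsub hoo.1))

end CausalGraph
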